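/- Let Z₁,…,Zₙ be i.i.d. random variables with density f ∈ F_{α,β}, where α > 0 and β ∈ ℝ. Then there exists a constant C₀(α,β,r) depending only on α, β, r such that for any r ≥ 1, t ≥ r^r, and n ≥ e^r, P( (1/√n) | ∑_{i=1}^n ( |Zᵢ|^r − E|Zᵢ|^r ) | ≥ C₀(α,β,r) t ) ≤ exp( −t^{1/r} ). -/

import Mathlib

open MeasureTheory Real Set

/-- A probability density on ℝ: measurable, nonnegative, integrating to one. -/
def IsDensityFn (f : ℝ → ℝ) : Prop :=
  Measurable f ∧ (∀ x, 0 ≤ f x) ∧ ∫ x, f x = 1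

/-- Log-concavity of a nonnegative function (multiplicative form, allowing zeros). -/
def IsLogConcaveFn (f : ℝ → ℝ) : Prop :=
  ∀ x y t : ℝ, 0 ≤ t → t ≤ 1 →
    f x ^ t * f y ^ (1 - t) ≤ f (t * x + (1 - t) * y)

/-- The probability measure on ℝ with Lebesgue density `f`. -/
noncomputable def densityMeasure (f : ℝ → ℝ) : Measure ℝ :=
  MeasureTheory.volume.withDensity fun x => ENNReal.ofReal (f x)


/-! Write `p = t ^ (1 / r)`. The envelope gives `Z` an exponential moment `E exp (a |Z|) ≤ K`, and
the rest is Bernstein's method. For `r > 1` the summand `|Z| ^ r` need not have an exponential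
moment, so it is truncated at a level `L` of order `p * log n`. Below `L` one has
`θ |Z| ^ r ≤ a |Z| / 2` as soon as `θ L ^ (r - 1) ≤ a / 2`, which permits `θ` of order
`p ^ (1 - r) / √n` because `(log n) ^ (r - 1) = O(√n)`; Chernoff's bound at this `θ` beats
`exp (-p)`. Some `|Zᵢ|` exceeds `L` with probability at most `n K exp (-a L)`, which is also small,
and the lower tail needs no truncation because `-θ |Z| ^ r` is bounded above. -/

open ProbabilityTheory

section ElementaryInequalities

lemma exp_le_one_add_add_sq_mul_max (x : ℝ) : exp x ≤ 1 + x + x ^ 2 * max 1 (exp x) := by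
  rcases le_or_gt |x| 1 with hx | hx
  · have hquad : exp x - 1 - x ≤ x ^ 2 := (le_abs_self _).trans (abs_exp_sub_one_sub_id_le hx)
    have hmax : x ^ 2 * 1 ≤ x ^ 2 * max 1 (exp x) := by gcongr; exact le_max_left _ _
    linarith
  · have hsq : 1 ≤ x ^ 2 := (one_le_sq_iff_one_le_abs x).2 hx.le
    rcases lt_abs.1 hx with hx | hx
    · have hmax : exp x ≤ max 1 (exp x) := le_max_right _ _
      nlinarith [exp_pos x]
    · have hexp : exp x ≤ 1 := exp_le_one_iff.2 (by linarith)
      have hmax : x ^ 2 * 1 ≤ x ^ 2 * max 1 (exp x) := by gcongr; exact le_max_left _ _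
      nlinarith

lemma exp_mul_le_of_sq_le_mul_exp {A θ u y : ℝ} (hu : 0 ≤ u) (hy : y ^ 2 ≤ A * exp u)
    (hθ : θ * y ≤ u) : exp (θ * y) ≤ 1 + θ * y + θ ^ 2 * (A * exp (2 * u)) := by
  have hAu : 0 ≤ A * exp u := (sq_nonneg y).trans hy
  have hmax : max 1 (exp (θ * y)) ≤ exp u := max_le (one_le_exp hu) (exp_le_exp.2 hθ)
  calc exp (θ * y) ≤ 1 + θ * y + (θ * y) ^ 2 * max 1 (exp (θ * y)) :=
        exp_le_one_add_add_sq_mul_max _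
    _ ≤ 1 + θ * y + θ ^ 2 * (A * exp u * exp u) := by
        rw [mul_pow, mul_assoc (θ ^ 2)]; gcongr
    _ = 1 + θ * y + θ ^ 2 * (A * exp (2 * u)) := by rw [two_mul, exp_add, mul_assoc]

lemma one_add_log_rpow_le_mul_sqrt {r x : ℝ} (hr : 0 ≤ r) (hx : 1 ≤ x) :
    (1 + log x) ^ r ≤ (2 * r) ^ r * exp (1 / 2) * √x := by
  have hlog : 0 ≤ log x := log_nonneg hx
  have hsqrt : √x = exp (1 / 2 * log x) := by
    rw [sqrt_eq_rpow, rpow_def_of_pos (by linarith), mul_comm]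
  have hpow := rpow_abs_le_mul_exp_abs (1 + log x) hr (one_half_pos (α := ℝ)).ne'
  rw [abs_of_nonneg (by linarith : 0 ≤ 1 + log x), abs_of_pos one_half_pos] at hpow
  calc (1 + log x) ^ r ≤ (r / (1 / 2)) ^ r * exp (1 / 2 * (1 + log x)) := hpow
    _ = (2 * r) ^ r * exp (1 / 2) * √x := by
        rw [hsqrt, mul_assoc, ← exp_add]; ring_nf

lemma mul_rpow_le_mul_of_le {L θ b r x : ℝ} (hr : 1 ≤ r) (hθ : 0 ≤ θ)
    (hL : θ * L ^ (r - 1) ≤ b) (hx : 0 ≤ x) (hxL : x ≤ L) : θ * x ^ r ≤ b * x := by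
  have hsplit : x ^ r = x ^ (r - 1) * x := by
    rw [← rpow_add_one' hx (by linarith), sub_add_cancel]
  calc θ * x ^ r = θ * x ^ (r - 1) * x := by rw [hsplit, mul_assoc]
    _ ≤ θ * L ^ (r - 1) * x := by gcongr
    _ ≤ b * x := by gcongr

lemma exp_neg_three_mul_le {p : ℝ} (hp : 1 ≤ p) : exp (-(3 * p)) ≤ exp (-p) / 3 := by
  have hthree : 3 ≤ exp (2 * p) := by linarith [add_one_le_exp (2 * p)]
  calc exp (-(3 * p)) = exp (-p) / exp (2 * p) := by rw [← exp_sub]; ring_nf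
    _ ≤ exp (-p) / 3 := by gcongr

end ElementaryInequalities

section Chernoff

variable {Ω : Type*} [MeasurableSpace Ω] {P : Measure Ω}

lemma integrable_of_sq_le_mul_exp [IsFiniteMeasure P] {U Y : Ω → ℝ} {A : ℝ}
    (hYm : Measurable Y) (hU : ∀ ω, 0 ≤ U ω) (hY : ∀ ω, Y ω ^ 2 ≤ A * exp (U ω))
    (hint : Integrable (fun ω => exp (2 * U ω)) P) : Integrable Y P := by
  refine ((integrable_const 1).add (hint.const_mul A)).mono' hYm.aestronglyMeasurable
    (.of_forall fun ω => ?_)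
  have hA : 0 ≤ A := nonneg_of_mul_nonneg_left ((sq_nonneg _).trans (hY ω)) (exp_pos _)
  have hexp : A * exp (U ω) ≤ A * exp (2 * U ω) := by gcongr; linarith [hU ω]
  rw [norm_eq_abs, Pi.add_apply]
  nlinarith [hY ω, sq_abs (Y ω), sq_nonneg (|Y ω| - 1)]

lemma integrable_exp_mul_of_mul_le {U Y : Ω → ℝ} {θ : ℝ} (hYm : Measurable Y)
    (hU : ∀ ω, 0 ≤ U ω) (hθ : ∀ ω, θ * Y ω ≤ U ω)
    (hint : Integrable (fun ω => exp (2 * U ω)) P) :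
    Integrable (fun ω => exp (θ * Y ω)) P := by
  refine hint.mono' (by fun_prop) (.of_forall fun ω => ?_)
  rw [norm_eq_abs, abs_exp, exp_le_exp]
  linarith [hU ω, hθ ω]

lemma mgf_le_exp_of_sq_le_mul_exp [IsProbabilityMeasure P] {U Y : Ω → ℝ} {A θ : ℝ}
    (hYm : Measurable Y) (hU : ∀ ω, 0 ≤ U ω) (hY : ∀ ω, Y ω ^ 2 ≤ A * exp (U ω))
    (hθ : ∀ ω, θ * Y ω ≤ U ω) (hint : Integrable (fun ω => exp (2 * U ω)) P) :
    mgf Y P θ ≤ exp (θ * P[Y] + θ ^ 2 * (A * ∫ ω, exp (2 * U ω) ∂P)) := by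
  have hlin : Integrable (fun ω => 1 + θ * Y ω) P :=
    (integrable_const 1).add ((integrable_of_sq_le_mul_exp hYm hU hY hint).const_mul θ)
  have hquad : Integrable (fun ω => θ ^ 2 * (A * exp (2 * U ω))) P :=
    (hint.const_mul A).const_mul _
  calc mgf Y P θ ≤ ∫ ω, (1 + θ * Y ω + θ ^ 2 * (A * exp (2 * U ω))) ∂P :=
        integral_mono (integrable_exp_mul_of_mul_le hYm hU hθ hint) (hlin.add hquad)
          fun ω => exp_mul_le_of_sq_le_mul_exp (hU ω) (hY ω) (hθ ω)
    _ = (θ * P[Y] + θ ^ 2 * (A * ∫ ω, exp (2 * U ω) ∂P)) + 1 := by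
        rw [integral_add hlin hquad, integral_add (integrable_const 1)
          ((integrable_of_sq_le_mul_exp hYm hU hY hint).const_mul θ)]
        simp only [integral_const_mul, integral_const, probReal_univ, smul_eq_mul]
        ring
    _ ≤ exp (θ * P[Y] + θ ^ 2 * (A * ∫ ω, exp (2 * U ω) ∂P)) := add_one_le_exp _

variable {ι : Type*} [Fintype ι]

lemma measureReal_ge_sum_sub_integral_le {U Y : ι → Ω → ℝ} {A K θ : ℝ} (hindep : iIndepFun Y P)
    (hYm : ∀ i, Measurable (Y i)) (hU : ∀ i ω, 0 ≤ U i ω) (hY : ∀ i ω, Y i ω ^ 2 ≤ A * exp (U i ω))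
    (hθ : 0 ≤ θ) (hθU : ∀ i ω, θ * Y i ω ≤ U i ω)
    (hint : ∀ i, Integrable (fun ω => exp (2 * U i ω)) P)
    (hK : ∀ i, ∫ ω, exp (2 * U i ω) ∂P ≤ K) (s : ℝ) :
    P.real {ω | s ≤ ∑ i, (Y i ω - P[Y i])} ≤
      exp (-θ * s + Fintype.card ι * (θ ^ 2 * (A * K))) := by
  have := hindep.isProbabilityMeasure
  have hexp : Integrable (fun ω => exp (θ * (∑ i, Y i) ω)) P :=
    hindep.integrable_exp_mul_sum hYm fun i _ =>
      integrable_exp_mul_of_mul_le (hYm i) (hU i) (hθU i) (hint i)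
  have hmgf (i : ι) : mgf (Y i) P θ ≤ exp (θ * P[Y i] + θ ^ 2 * (A * K)) := by
    obtain ⟨ω⟩ := nonempty_of_isProbabilityMeasure P
    have hA : 0 ≤ A := nonneg_of_mul_nonneg_left ((sq_nonneg _).trans (hY i ω)) (exp_pos _)
    refine (mgf_le_exp_of_sq_le_mul_exp (hYm i) (hU i) (hY i) (hθU i) (hint i)).trans ?_
    gcongr
    exact hK i
  have hset : {ω | s ≤ ∑ i, (Y i ω - P[Y i])} = {ω | s + ∑ i, P[Y i] ≤ (∑ i, Y i) ω} := by
    ext ω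
    simp only [mem_ofPred_eq, Finset.sum_sub_distrib, Finset.sum_apply, le_sub_iff_add_le]
  calc P.real {ω | s ≤ ∑ i, (Y i ω - P[Y i])}
      ≤ exp (-θ * (s + ∑ i, P[Y i])) * mgf (∑ i, Y i) P θ := by
        rw [hset]; exact measure_ge_le_exp_mul_mgf _ hθ hexp
    _ ≤ exp (-θ * (s + ∑ i, P[Y i])) * ∏ i, exp (θ * P[Y i] + θ ^ 2 * (A * K)) := by
        rw [hindep.mgf_sum hYm]
        gcongr with i
        · exact fun i _ => mgf_nonneg
        · exact hmgf i
    _ = exp (-θ * s + Fintype.card ι * (θ ^ 2 * (A * K))) := by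
        rw [← exp_sum, ← exp_add, Finset.sum_add_distrib, ← Finset.mul_sum, Finset.sum_const,
          Finset.card_univ, nsmul_eq_mul]
        ring_nf

lemma measureReal_ge_sum_comp_sub_integral_le {X : ι → Ω → ℝ} {g : ℝ → ℝ} {A K a θ : ℝ}
    (ha : 0 ≤ a) (hg : Measurable g) (hgsq : ∀ x, g x ^ 2 ≤ A * exp (a / 2 * |x|))
    (hθ : 0 ≤ θ) (hθg : ∀ x, θ * g x ≤ a / 2 * |x|)
    (hindep : iIndepFun X P) (hXm : ∀ i, Measurable (X i))
    (hint : ∀ i, Integrable (fun ω => exp (a * |X i ω|)) P)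
    (hK : ∀ i, ∫ ω, exp (a * |X i ω|) ∂P ≤ K) (s : ℝ) :
    P.real {ω | s ≤ ∑ i, (g (X i ω) - ∫ ω, g (X i ω) ∂P)} ≤
      exp (-θ * s + Fintype.card ι * (θ ^ 2 * (A * K))) := by
  have htwo (i : ι) (ω : Ω) : 2 * (a / 2 * |X i ω|) = a * |X i ω| := by ring
  exact measureReal_ge_sum_sub_integral_le (U := fun i ω => a / 2 * |X i ω|)
    (hindep.comp (fun _ => g) fun _ => hg) (fun i => hg.comp (hXm i)) (fun i ω => by positivity)
    (fun i ω => hgsq (X i ω)) hθ (fun i ω => hθg (X i ω))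
    (by simpa only [htwo] using hint) (by simpa only [htwo] using hK) s

lemma measureReal_exists_lt_abs_le {X : ι → Ω → ℝ} [IsFiniteMeasure P] {a K : ℝ} (ha : 0 ≤ a)
    (hint : ∀ i, Integrable (fun ω => exp (a * |X i ω|)) P)
    (hK : ∀ i, ∫ ω, exp (a * |X i ω|) ∂P ≤ K) (L : ℝ) :
    P.real {ω | ∃ i, L < |X i ω|} ≤ Fintype.card ι * (K * exp (-(a * L))) := by
  have htail (i : ι) : P.real {ω | L < |X i ω|} ≤ K * exp (-(a * L)) :=
    calc P.real {ω | L < |X i ω|} ≤ P.real {ω | L ≤ |X i ω|} :=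
          measureReal_mono fun ω (hω : L < |X i ω|) => hω.le
      _ ≤ exp (-a * L) * mgf (fun ω => |X i ω|) P a := measure_ge_le_exp_mul_mgf L ha (hint i)
      _ ≤ K * exp (-(a * L)) := by rw [mul_comm, neg_mul]; gcongr; exact hK i
  calc P.real {ω | ∃ i, L < |X i ω|} = P.real (⋃ i, {ω | L < |X i ω|}) := by
        congr 1; ext ω; simp only [mem_ofPred_eq, mem_iUnion]
    _ ≤ ∑ i, P.real {ω | L < |X i ω|} := measureReal_iUnion_fintype_le _
    _ ≤ ∑ _i : ι, K * exp (-(a * L)) := Finset.sum_le_sum fun i _ => htail i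
    _ = Fintype.card ι * (K * exp (-(a * L))) := by
        rw [Finset.sum_const, Finset.card_univ, nsmul_eq_mul]

end Chernoff

section AbsolutePowers

/-- The constant in `|x| ^ (2 * r) ≤ absPowerCoeff a r * exp (a / 2 * |x|)`, through which an
exponential moment of order `a` controls the variance of `|x| ^ r`. -/
noncomputable def absPowerCoeff (a r : ℝ) : ℝ := (2 * r / (a / 2)) ^ (2 * r)

lemma absPowerCoeff_nonneg {a r : ℝ} (ha : 0 ≤ a) (hr : 0 ≤ r) : 0 ≤ absPowerCoeff a r := by
  unfold absPowerCoeff; positivity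

lemma abs_rpow_sq_le_absPowerCoeff_mul_exp {a r : ℝ} (ha : 0 < a) (hr : 0 ≤ r) (x : ℝ) :
    (|x| ^ r) ^ 2 ≤ absPowerCoeff a r * exp (a / 2 * |x|) := by
  have hpow := rpow_abs_le_mul_exp_abs x (mul_nonneg zero_le_two hr) (half_pos ha).ne'
  rw [abs_of_pos (half_pos ha)] at hpow
  rwa [← rpow_mul_natCast (abs_nonneg x), Nat.cast_ofNat, mul_comm r]

variable {Ω ι : Type*} [MeasurableSpace Ω] [Fintype ι] {P : Measure Ω} {X : ι → Ω → ℝ}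
  {a K L r θ : ℝ}

lemma measureReal_ge_neg_sum_abs_rpow_sub_integral_le (ha : 0 < a) (hr : 0 ≤ r) (hθ : 0 ≤ θ)
    (hindep : iIndepFun X P) (hXm : ∀ i, Measurable (X i))
    (hint : ∀ i, Integrable (fun ω => exp (a * |X i ω|)) P)
    (hK : ∀ i, ∫ ω, exp (a * |X i ω|) ∂P ≤ K) (s : ℝ) :
    P.real {ω | s ≤ -∑ i, (|X i ω| ^ r - ∫ ω, |X i ω| ^ r ∂P)} ≤
      exp (-θ * s + Fintype.card ι * (θ ^ 2 * (absPowerCoeff a r * K))) := by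
  have hneg (x : ℝ) : θ * -|x| ^ r ≤ a / 2 * |x| := by
    rw [mul_neg]
    exact (neg_nonpos.2 (by positivity)).trans (by positivity)
  have hchernoff := measureReal_ge_sum_comp_sub_integral_le (g := fun x => -|x| ^ r) ha.le
    (by fun_prop) (fun x => by rw [neg_sq]; exact abs_rpow_sq_le_absPowerCoeff_mul_exp ha hr x)
    hθ hneg hindep hXm hint hK s
  simpa only [integral_neg, sub_neg_eq_add, neg_add_eq_sub, ← Finset.sum_neg_distrib, neg_sub]
    using hchernoff

/-- The truncated power `|x| ^ r * 1_{|x| ≤ L}`, which agrees with `|x| ^ r` on the event that no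
summand exceeds the level `L`. -/
noncomputable def truncAbsRpow (L r : ℝ) : ℝ → ℝ := {x | |x| ≤ L}.indicator fun x => |x| ^ r

lemma measurable_truncAbsRpow (L r : ℝ) : Measurable (truncAbsRpow L r) :=
  Measurable.indicator (by fun_prop) (measurableSet_le (by fun_prop) measurable_const)

lemma truncAbsRpow_nonneg (L r x : ℝ) : 0 ≤ truncAbsRpow L r x :=
  indicator_nonneg (fun _ _ => by positivity) x

lemma truncAbsRpow_le (L r x : ℝ) : truncAbsRpow L r x ≤ |x| ^ r :=
  indicator_le_self' (fun _ _ => by positivity) x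

lemma mul_truncAbsRpow_le {b : ℝ} (hb : 0 ≤ b) (hr : 1 ≤ r) (hθ : 0 ≤ θ)
    (hθL : θ * L ^ (r - 1) ≤ b) (x : ℝ) : θ * truncAbsRpow L r x ≤ b * |x| := by
  by_cases hx : |x| ≤ L
  · rw [truncAbsRpow, indicator_of_mem (show x ∈ {x | |x| ≤ L} from hx)]
    exact mul_rpow_le_mul_of_le hr hθ hθL (abs_nonneg x) hx
  · rw [truncAbsRpow, indicator_of_notMem (show x ∉ {x | |x| ≤ L} from hx), mul_zero]
    positivity

lemma measureReal_ge_sum_truncAbsRpow_sub_integral_le (ha : 0 < a) (hr : 1 ≤ r) (hθ : 0 ≤ θ)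
    (hθL : θ * L ^ (r - 1) ≤ a / 2) (hindep : iIndepFun X P) (hXm : ∀ i, Measurable (X i))
    (hint : ∀ i, Integrable (fun ω => exp (a * |X i ω|)) P)
    (hK : ∀ i, ∫ ω, exp (a * |X i ω|) ∂P ≤ K) (s : ℝ) :
    P.real {ω | s ≤ ∑ i, (truncAbsRpow L r (X i ω) - ∫ ω, truncAbsRpow L r (X i ω) ∂P)} ≤
      exp (-θ * s + Fintype.card ι * (θ ^ 2 * (absPowerCoeff a r * K))) := by
  have hsq (x : ℝ) : truncAbsRpow L r x ^ 2 ≤ absPowerCoeff a r * exp (a / 2 * |x|) :=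
    (pow_le_pow_left₀ (truncAbsRpow_nonneg L r x) (truncAbsRpow_le L r x) 2).trans
      (abs_rpow_sq_le_absPowerCoeff_mul_exp ha (zero_le_one.trans hr) x)
  exact measureReal_ge_sum_comp_sub_integral_le ha.le (measurable_truncAbsRpow L r) hsq hθ
    (mul_truncAbsRpow_le (half_pos ha).le hr hθ hθL) hindep hXm hint hK s

lemma integrable_abs_rpow_of_integrable_exp_mul_abs [IsFiniteMeasure P] {Z : Ω → ℝ} (ha : 0 < a)
    (hr : 0 ≤ r) (hZ : Measurable Z) (hint : Integrable (fun ω => exp (a * |Z ω|)) P) :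
    Integrable (fun ω => |Z ω| ^ r) P := by
  have htwo (ω : Ω) : 2 * (a / 2 * |Z ω|) = a * |Z ω| := by ring
  exact integrable_of_sq_le_mul_exp (U := fun ω => a / 2 * |Z ω|) (by fun_prop)
    (fun ω => by positivity) (fun ω => abs_rpow_sq_le_absPowerCoeff_mul_exp ha hr (Z ω))
    (by simpa only [htwo] using hint)

lemma measureReal_ge_sum_abs_rpow_sub_integral_le (ha : 0 < a) (hr : 1 ≤ r) (hθ : 0 ≤ θ)
    (hθL : θ * L ^ (r - 1) ≤ a / 2) (hindep : iIndepFun X P) (hXm : ∀ i, Measurable (X i))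
    (hint : ∀ i, Integrable (fun ω => exp (a * |X i ω|)) P)
    (hK : ∀ i, ∫ ω, exp (a * |X i ω|) ∂P ≤ K) (s : ℝ) :
    P.real {ω | s ≤ ∑ i, (|X i ω| ^ r - ∫ ω, |X i ω| ^ r ∂P)} ≤
      exp (-θ * s + Fintype.card ι * (θ ^ 2 * (absPowerCoeff a r * K))) +
        Fintype.card ι * (K * exp (-(a * L))) := by
  have := hindep.isProbabilityMeasure
  have hmean (i : ι) : ∫ ω, truncAbsRpow L r (X i ω) ∂P ≤ ∫ ω, |X i ω| ^ r ∂P :=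
    integral_mono_of_nonneg (.of_forall fun ω => truncAbsRpow_nonneg L r (X i ω))
      (integrable_abs_rpow_of_integrable_exp_mul_abs ha (zero_le_one.trans hr) (hXm i) (hint i))
      (.of_forall fun ω => truncAbsRpow_le L r (X i ω))
  have hsub : {ω | s ≤ ∑ i, (|X i ω| ^ r - ∫ ω, |X i ω| ^ r ∂P)} ⊆
      {ω | s ≤ ∑ i, (truncAbsRpow L r (X i ω) - ∫ ω, truncAbsRpow L r (X i ω) ∂P)} ∪
        {ω | ∃ i, L < |X i ω|} := by
    intro ω (hω : s ≤ _)
    by_cases hlarge : ∃ i, L < |X i ω|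
    · exact Or.inr hlarge
    · push Not at hlarge
      refine Or.inl (hω.trans (Finset.sum_le_sum fun i _ => ?_))
      rw [truncAbsRpow, indicator_of_mem (show X i ω ∈ {x | |x| ≤ L} from hlarge i)]
      exact sub_le_sub_left (hmean i) _
  exact (measureReal_mono hsub).trans <| (measureReal_union_le _ _).trans <| add_le_add
    (measureReal_ge_sum_truncAbsRpow_sub_integral_le ha hr hθ hθL hindep hXm hint hK s)
    (measureReal_exists_lt_abs_le ha.le hint hK L)

lemma measureReal_ge_abs_sum_abs_rpow_sub_integral_le (ha : 0 < a) (hr : 1 ≤ r) (hθ : 0 ≤ θ)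
    (hθL : θ * L ^ (r - 1) ≤ a / 2) (hindep : iIndepFun X P) (hXm : ∀ i, Measurable (X i))
    (hint : ∀ i, Integrable (fun ω => exp (a * |X i ω|)) P)
    (hK : ∀ i, ∫ ω, exp (a * |X i ω|) ∂P ≤ K) (s : ℝ) :
    P.real {ω | s ≤ |∑ i, (|X i ω| ^ r - ∫ ω, |X i ω| ^ r ∂P)|} ≤
      2 * exp (-θ * s + Fintype.card ι * (θ ^ 2 * (absPowerCoeff a r * K))) +
        Fintype.card ι * (K * exp (-(a * L))) := by
  have := hindep.isProbabilityMeasure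
  have hupper := measureReal_ge_sum_abs_rpow_sub_integral_le ha hr hθ hθL hindep hXm hint hK s
  have hlower := measureReal_ge_neg_sum_abs_rpow_sub_integral_le ha (zero_le_one.trans hr) hθ
    hindep hXm hint hK s
  simp only [le_abs, ofPred_or]
  linarith [measureReal_union_le (μ := P)
    {ω | s ≤ ∑ i, (|X i ω| ^ r - ∫ ω, |X i ω| ^ r ∂P)}
    {ω | s ≤ -∑ i, (|X i ω| ^ r - ∫ ω, |X i ω| ^ r ∂P)}]

end AbsolutePowers

section ChoiceOfParameters

/-- The level at which `n` summands are truncated for a deviation of probability `exp (-p)`.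
Since `K ≤ exp (3 * K) / 3`, the factor `1 + 3 * K` makes the union bound
`n * (K * exp (-(a * truncLevel a K n p)))` at most a third of `exp (-p)`. -/
noncomputable def truncLevel (a K n p : ℝ) : ℝ := (1 + 3 * K) / a * ((1 + log n) * p)

/-- The constant in `truncLevel a K n p ^ (r - 1) ≤ truncCoeff a K r * (√n * p ^ (r - 1))`. -/
noncomputable def truncCoeff (a K r : ℝ) : ℝ :=
  ((1 + 3 * K) / a) ^ (r - 1) * ((2 * r) ^ r * exp (1 / 2))

/-- The Chernoff parameter in units of `1 / (√n * p ^ (r - 1))`, chosen as large as truncation at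
`truncLevel` permits. -/
noncomputable def tiltCoeff (a K r : ℝ) : ℝ := a / 2 / truncCoeff a K r

/-- The constant `C` such that deviations of size `C * √n * p ^ r` have probability at most
`exp (-p)`, for an exponential moment of order `a` bounded by `K`. -/
noncomputable def deviationCoeff (a K r : ℝ) : ℝ :=
  tiltCoeff a K r * (absPowerCoeff a r * K) + 3 / tiltCoeff a K r

variable {a K n p r : ℝ}

lemma truncCoeff_pos (ha : 0 < a) (hK : 0 ≤ K) (hr : 1 ≤ r) : 0 < truncCoeff a K r := by
  unfold truncCoeff; positivity

lemma tiltCoeff_pos (ha : 0 < a) (hK : 0 ≤ K) (hr : 1 ≤ r) : 0 < tiltCoeff a K r :=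
  div_pos (half_pos ha) (truncCoeff_pos ha hK hr)

lemma deviationCoeff_pos (ha : 0 < a) (hK : 0 ≤ K) (hr : 1 ≤ r) : 0 < deviationCoeff a K r := by
  have hε := tiltCoeff_pos ha hK hr
  have hA := absPowerCoeff_nonneg ha.le (zero_le_one.trans hr)
  unfold deviationCoeff; positivity

lemma truncLevel_rpow_le (ha : 0 < a) (hK : 0 ≤ K) (hr : 1 ≤ r) (hn : 1 ≤ n) (hp : 0 ≤ p) :
    truncLevel a K n p ^ (r - 1) ≤ truncCoeff a K r * (√n * p ^ (r - 1)) := by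
  have hlog : 0 ≤ log n := log_nonneg hn
  have hlogpow : (1 + log n) ^ (r - 1) ≤ (2 * r) ^ r * exp (1 / 2) * √n :=
    (rpow_le_rpow_of_exponent_le (by linarith) (by linarith)).trans
      (one_add_log_rpow_le_mul_sqrt (zero_le_one.trans hr) hn)
  calc truncLevel a K n p ^ (r - 1)
      = ((1 + 3 * K) / a) ^ (r - 1) * ((1 + log n) ^ (r - 1) * p ^ (r - 1)) := by
        rw [truncLevel, mul_rpow (by positivity) (by positivity), mul_rpow (by positivity) hp]
    _ ≤ ((1 + 3 * K) / a) ^ (r - 1) * ((2 * r) ^ r * exp (1 / 2) * √n * p ^ (r - 1)) := by gcongr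
    _ = truncCoeff a K r * (√n * p ^ (r - 1)) := by rw [truncCoeff]; ring

lemma mul_mul_exp_neg_mul_truncLevel_le (ha : 0 < a) (hK : 0 ≤ K) (hn : 1 ≤ n) (hp : 1 ≤ p) :
    n * (K * exp (-(a * truncLevel a K n p))) ≤ exp (-p) / 3 := by
  have hlog : 0 ≤ log n := log_nonneg hn
  have hlevel : log n + 3 * K + p ≤ a * truncLevel a K n p := by
    have hcancel : a * truncLevel a K n p = (1 + 3 * K) * ((1 + log n) * p) := by
      rw [truncLevel]; field_simp
    rw [hcancel]
    nlinarith [mul_nonneg hlog (sub_nonneg.2 hp), mul_nonneg hK (sub_nonneg.2 hp),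
      mul_nonneg (mul_nonneg hK hlog) (zero_le_one.trans hp)]
  have hK3 : K ≤ exp (3 * K) / 3 := by linarith [add_one_le_exp (3 * K)]
  calc n * (K * exp (-(a * truncLevel a K n p)))
      ≤ n * (exp (3 * K) / 3 * exp (-(log n + 3 * K + p))) := by gcongr
    _ = exp (log n) * exp (3 * K) * exp (-(log n + 3 * K + p)) / 3 := by
        rw [exp_log (by linarith)]; ring
    _ = exp (-p) / 3 := by rw [← exp_add, ← exp_add]; ring_nf

lemma neg_tilt_mul_deviation_add_le {B ε : ℝ} (hB : 0 ≤ B) (hε : 0 < ε) (hn : 0 < n)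
    (hp : 1 ≤ p) (hr : 1 ≤ r) :
    -(ε / (√n * p ^ (r - 1))) * ((ε * B + 3 / ε) * (√n * p ^ r)) +
      n * ((ε / (√n * p ^ (r - 1))) ^ 2 * B) ≤ -(3 * p) := by
  have hp0 : 0 < p := by linarith
  have hq : 1 ≤ p ^ (r - 1) := one_le_rpow hp (by linarith)
  have hsplit : p ^ r = p ^ (r - 1) * p := by
    rw [← rpow_add_one hp0.ne', sub_add_cancel]
  have hlinear : ε / (√n * p ^ (r - 1)) * ((ε * B + 3 / ε) * (√n * p ^ r)) =
      ε ^ 2 * B * p + 3 * p := by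
    rw [hsplit]; field_simp
  have hquad : n * ((ε / (√n * p ^ (r - 1))) ^ 2 * B) ≤ ε ^ 2 * B * p :=
    calc n * ((ε / (√n * p ^ (r - 1))) ^ 2 * B) = ε ^ 2 * B / (p ^ (r - 1)) ^ 2 := by
          rw [div_pow, mul_pow, sq_sqrt hn.le]; field_simp
      _ ≤ ε ^ 2 * B := div_le_self (by positivity) (one_le_pow₀ hq)
      _ ≤ ε ^ 2 * B * p := le_mul_of_one_le_right (by positivity) hp
  linarith

theorem measureReal_ge_abs_sum_abs_rpow_sub_integral_le_exp_neg {Ω ι : Type*} [MeasurableSpace Ω]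
    [Fintype ι] [Nonempty ι] {P : Measure Ω} {X : ι → Ω → ℝ} (ha : 0 < a) (hr : 1 ≤ r)
    (hindep : iIndepFun X P) (hXm : ∀ i, Measurable (X i))
    (hint : ∀ i, Integrable (fun ω => exp (a * |X i ω|)) P)
    (hK : ∀ i, ∫ ω, exp (a * |X i ω|) ∂P ≤ K) (hp : 1 ≤ p) :
    P.real {ω | deviationCoeff a K r * (√(Fintype.card ι) * p ^ r) ≤
      |∑ i, (|X i ω| ^ r - ∫ ω, |X i ω| ^ r ∂P)|} ≤ exp (-p) := by
  have hK0 : 0 ≤ K := (integral_nonneg fun ω => (exp_pos _).le).trans (hK (Classical.arbitrary ι))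
  have hn : (1 : ℝ) ≤ Fintype.card ι := by exact_mod_cast Fintype.card_pos
  have hp0 : 0 < p := zero_lt_one.trans_le hp
  have hε := tiltCoeff_pos ha hK0 hr
  have hD := truncCoeff_pos ha hK0 hr
  have hA := absPowerCoeff_nonneg ha.le (zero_le_one.trans hr)
  set θ := tiltCoeff a K r / (√(Fintype.card ι) * p ^ (r - 1)) with hθ
  have hθL : θ * truncLevel a K (Fintype.card ι) p ^ (r - 1) ≤ a / 2 :=
    calc θ * truncLevel a K (Fintype.card ι) p ^ (r - 1)
        ≤ θ * (truncCoeff a K r * (√(Fintype.card ι) * p ^ (r - 1))) := by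
          gcongr; exact truncLevel_rpow_le ha hK0 hr hn hp0.le
      _ = a / 2 := by rw [hθ, tiltCoeff]; field_simp
  have htail := measureReal_ge_abs_sum_abs_rpow_sub_integral_le ha hr (by positivity) hθL hindep
    hXm hint hK (deviationCoeff a K r * (√(Fintype.card ι) * p ^ r))
  have hchernoff := neg_tilt_mul_deviation_add_le (mul_nonneg hA hK0) hε
    (zero_lt_one.trans_le hn) hp hr
  have hthird := (exp_le_exp.2 hchernoff).trans (exp_neg_three_mul_le hp)
  have hlarge := mul_mul_exp_neg_mul_truncLevel_le ha hK0 hn hp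
  rw [← hθ, ← deviationCoeff] at hthird
  linarith

end ChoiceOfParameters

section Densities

variable {f : ℝ → ℝ} {α β : ℝ}

lemma integral_exp_neg_mul_abs {b : ℝ} (hb : 0 < b) : ∫ x : ℝ, exp (-b * |x|) = 2 / b := by
  rw [integral_comp_abs (f := fun x => exp (-b * x)), integral_exp_mul_Ioi (neg_neg_of_pos hb)]
  simp [field]

lemma integrable_exp_neg_mul_abs {b : ℝ} (hb : 0 < b) :
    Integrable fun x : ℝ => exp (-b * |x|) :=
  .of_integral_ne_zero (by rw [integral_exp_neg_mul_abs hb]; positivity)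

lemma isProbabilityMeasure_densityMeasure (hf : IsDensityFn f) :
    IsProbabilityMeasure (densityMeasure f) := by
  obtain ⟨-, hf0, hf1⟩ := hf
  have hfi : Integrable f := .of_integral_ne_zero (by rw [hf1]; exact one_ne_zero)
  constructor
  rw [densityMeasure, withDensity_apply _ MeasurableSet.univ, Measure.restrict_univ,
    ← ofReal_integral_eq_lintegral_ofReal hfi (.of_forall hf0), hf1, ENNReal.ofReal_one]

lemma integral_densityMeasure (hf : Measurable f) (hf0 : ∀ x, 0 ≤ f x) (g : ℝ → ℝ) :
    ∫ x, g x ∂(densityMeasure f) = ∫ x, g x * f x := by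
  rw [densityMeasure, integral_withDensity_eq_integral_toReal_smul hf.ennreal_ofReal
    (.of_forall fun _ => ENNReal.ofReal_lt_top)]
  simp only [ENNReal.toReal_ofReal (hf0 _), smul_eq_mul, mul_comm]

lemma integrable_densityMeasure_iff (hf : Measurable f) (hf0 : ∀ x, 0 ≤ f x) {g : ℝ → ℝ} :
    Integrable g (densityMeasure f) ↔ Integrable fun x => g x * f x := by
  rw [densityMeasure, integrable_withDensity_iff hf.ennreal_ofReal
    (.of_forall fun _ => ENNReal.ofReal_lt_top)]
  simp only [ENNReal.toReal_ofReal (hf0 _)]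

lemma exp_half_mul_abs_mul_le (hle : ∀ x, f x ≤ exp (β - α * |x|)) (x : ℝ) :
    exp (α / 2 * |x|) * f x ≤ exp β * exp (-(α / 2) * |x|) :=
  calc exp (α / 2 * |x|) * f x ≤ exp (α / 2 * |x|) * exp (β - α * |x|) := by gcongr; exact hle x
    _ = exp β * exp (-(α / 2) * |x|) := by rw [← exp_add, ← exp_add]; ring_nf

lemma integrable_exp_half_mul_abs_densityMeasure (hα : 0 < α) (hf : Measurable f)
    (hf0 : ∀ x, 0 ≤ f x) (hle : ∀ x, f x ≤ exp (β - α * |x|)) :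
    Integrable (fun x => exp (α / 2 * |x|)) (densityMeasure f) := by
  rw [integrable_densityMeasure_iff hf hf0]
  refine ((integrable_exp_neg_mul_abs (half_pos hα)).const_mul (exp β)).mono' (by fun_prop)
    (.of_forall fun x => ?_)
  rw [norm_of_nonneg (mul_nonneg (exp_pos _).le (hf0 x))]
  exact exp_half_mul_abs_mul_le hle x

lemma integral_exp_half_mul_abs_densityMeasure_le (hα : 0 < α) (hf : Measurable f)
    (hf0 : ∀ x, 0 ≤ f x) (hle : ∀ x, f x ≤ exp (β - α * |x|)) :
    ∫ x, exp (α / 2 * |x|) ∂(densityMeasure f) ≤ exp β * (2 / (α / 2)) := by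
  rw [integral_densityMeasure hf hf0, ← integral_exp_neg_mul_abs (half_pos hα),
    ← integral_const_mul]
  exact integral_mono_of_nonneg (.of_forall fun x => mul_nonneg (exp_pos _).le (hf0 x))
    ((integrable_exp_neg_mul_abs (half_pos hα)).const_mul _)
    (.of_forall (exp_half_mul_abs_mul_le hle))

end Densities

theorem pi_ge_abs_sum_abs_rpow_sub_integral_le {ν : Measure ℝ} [IsProbabilityMeasure ν]
    {a K r t : ℝ} (ha : 0 < a) (hr : 1 ≤ r)
    (hint : Integrable (fun x => exp (a * |x|)) ν) (hK : ∫ x, exp (a * |x|) ∂ν ≤ K)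
    {n : ℕ} (hn : 1 ≤ n) (ht : 1 ≤ t) :
    (Measure.pi fun _ : Fin n => ν)
        {z : Fin n → ℝ | deviationCoeff a K r * t ≤
          (1 / √n) * |∑ i, (|z i| ^ r - ∫ x, |x| ^ r ∂ν)|} ≤
      ENNReal.ofReal (exp (-(t ^ (1 / r)))) := by
  have : Nonempty (Fin n) := Fin.pos_iff_nonempty.1 hn
  have heval (g : ℝ → ℝ) (hg : Measurable g) (i : Fin n) :
      ∫ z : Fin n → ℝ, g (z i) ∂(Measure.pi fun _ => ν) = ∫ x, g x ∂ν :=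
    integral_comp_eval (μ := fun _ : Fin n => ν) hg.aestronglyMeasurable
  have htail := measureReal_ge_abs_sum_abs_rpow_sub_integral_le_exp_neg
    (P := Measure.pi fun _ : Fin n => ν) (X := fun i z => z i) ha hr
    (iIndepFun_pi (X := fun _ x => x) fun _ => aemeasurable_id) (fun i => by fun_prop)
    (fun i => integrable_comp_eval (μ := fun _ : Fin n => ν) hint)
    (fun i => (heval _ (by fun_prop) i).trans_le hK)
    (one_le_rpow ht (by positivity : 0 ≤ 1 / r))
  simp only [heval (fun x => |x| ^ r) (by fun_prop)] at htail
  have hpow : (t ^ (1 / r)) ^ r = t := by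
    rw [one_div, rpow_inv_rpow (by linarith) (by linarith)]
  have hset : {z : Fin n → ℝ | deviationCoeff a K r * t ≤
        (1 / √n) * |∑ i, (|z i| ^ r - ∫ x, |x| ^ r ∂ν)|} =
      {z | deviationCoeff a K r * (√n * t) ≤ |∑ i, (|z i| ^ r - ∫ x, |x| ^ r ∂ν)|} := by
    ext z
    rw [mem_ofPred_eq, mem_ofPred_eq, one_div, inv_mul_eq_div,
      le_div_iff₀ (sqrt_pos.2 (by exact_mod_cast hn)), mul_assoc, mul_comm t]
  rw [hpow, Fintype.card_fin, ← hset] at htail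
  rw [← ofReal_measureReal]
  exact ENNReal.ofReal_le_ofReal htail

theorem moment_sum_concentration_general (α β : ℝ) (hα : 0 < α) (r : ℝ) (hr : 1 ≤ r) :
    ∃ C₀ : ℝ, 0 < C₀ ∧
      ∀ f : ℝ → ℝ, IsDensityFn f → (∀ x : ℝ, f x ≤ exp (β - α * |x|)) →
        ∀ n : ℕ, 1 ≤ n → ∀ t : ℝ, 1 ≤ t →
          (Measure.pi fun _ : Fin n => densityMeasure f)
              {z : Fin n → ℝ | C₀ * t ≤
                (1 / √n) * |∑ i, (|z i| ^ r - ∫ x : ℝ, |x| ^ r * f x)|}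
            ≤ ENNReal.ofReal (exp (-(t ^ (1 / r)))) := by
  refine ⟨deviationCoeff (α / 2) (exp β * (2 / (α / 2))) r,
    deviationCoeff_pos (half_pos hα) (by positivity) hr, fun f hf hle n hn t ht => ?_⟩
  have := isProbabilityMeasure_densityMeasure hf
  obtain ⟨hfm, hf0, -⟩ := hf
  have htail := pi_ge_abs_sum_abs_rpow_sub_integral_le (half_pos hα) hr
    (integrable_exp_half_mul_abs_densityMeasure hα hfm hf0 hle)
    (integral_exp_half_mul_abs_densityMeasure_le hα hfm hf0 hle) hn ht
  rwa [integral_densityMeasure hfm hf0] at htail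

/-- for i.i.d. `Z₁,…,Zₙ` with density `f ∈ F_{α,β}` (an upper
semi-continuous log-concave density with envelope `f x ≤ e^{β−α|x|}`), there is a
constant `C₀ = C₀(α,β,r)` such that for all `r ≥ 1`, `t ≥ r^r` and `n ≥ e^r`,
`P( n^{-1/2} |∑ᵢ (|Zᵢ|^r − E|Zᵢ|^r)| ≥ C₀ t ) ≤ exp(−t^{1/r})`. -/
theorem moment_sum_concentration (α β : ℝ) (hα : 0 < α) (r : ℝ) (hr : 1 ≤ r) :
    ∃ C₀ : ℝ, 0 < C₀ ∧
      ∀ f : ℝ → ℝ, IsDensityFn f → IsLogConcaveFn f → UpperSemicontinuous f →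
        (∀ x : ℝ, f x ≤ Real.exp (β - α * |x|)) →
        ∀ n : ℕ, Real.exp r ≤ (n : ℝ) → ∀ t : ℝ, r ^ r ≤ t →
          (Measure.pi fun _ : Fin n => densityMeasure f)
              {z : Fin n → ℝ |
                C₀ * t ≤ (1 / Real.sqrt n) *
                  |∑ i, (|z i| ^ r - ∫ x : ℝ, |x| ^ r * f x)|}
            ≤ ENNReal.ofReal (Real.exp (-(t ^ (1 / r)))) := by
  obtain ⟨C₀, hC₀, hbound⟩ := moment_sum_concentration_general α β hα r hr
  exact ⟨C₀, hC₀, fun f hf _ _ hle n hn t ht => hbound f hf hle n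
    (by exact_mod_cast (one_le_exp (by linarith)).trans hn) t
    ((one_le_rpow hr (by linarith)).trans ht)⟩
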